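/- Let 1 ≤ a ≤ b be integers and let X be an integer random variable with P[X = k] = k^{−2}/Z for a ≤ k ≤ b, where Z = Σ_{i=a}^{b} i^{−2}. Then (1/2) · ((E[X²] − E[X]) / E[X])² ≤ (1/2) · ((b − a + 1) / (ln(b + 1) − ln(a)))². (This is the bound underlying the paper's estimate on the expected number of multi-edges of the Configuration Model applied to a powerlaw degree sequence with exponent 2.) -/

import Mathlib

open MeasureTheory

/-!
Write `n = b - a + 1`, `H = ∑_{k=a}^b 1/k` and `Z = ∑_{k=a}^b 1/k²`. Then `E[X²] = n / Z` and
`E[X] = H / Z`, so the ratio on the left is `n / H - 1`. It is nonnegative because every term of `H`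
is at most `1`, and it is at most `n / (ln (b + 1) - ln a)` because the harmonic sum `H` dominates
the telescoping sum of `ln (k + 1) - ln k ≤ 1 / k` (`log_sub_log_le_sum_inv`). Squaring preserves
the inequality between nonnegative numbers.
-/

lemma log_sub_log_le_sum_inv (a b : ℕ) (ha : 1 ≤ a) (hab : a ≤ b) :
    Real.log ((b : ℝ) + 1) - Real.log (a : ℝ) ≤ ∑ k ∈ Finset.Icc a b, (k : ℝ)⁻¹ := by
  have step : ∀ k : ℕ, 1 ≤ k → Real.log ((k : ℝ) + 1) - Real.log (k : ℝ) ≤ (k : ℝ)⁻¹ := by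
    intro k hk
    have hk0 : (0 : ℝ) < k := by exact_mod_cast hk
    rw [← Real.log_div (by positivity) hk0.ne']
    refine (Real.log_le_sub_one_of_pos (by positivity)).trans_eq ?_
    field_simp
    ring
  induction b, hab using Nat.le_induction with
  | base => simpa using step a ha
  | succ m hm ih =>
    rw [Finset.sum_Icc_succ_top (by omega)]
    have := step (m + 1) (by omega)
    push_cast at this ⊢
    linarith

/-- The expectation of a function of a random variable in `ℕ` whose law charges only the points of
a finite set `s` is the corresponding finite sum; no integrability hypothesis is needed. -/
lemma integral_comp_eq_sum {Ω : Type*} [MeasurableSpace Ω] (μ : Measure Ω) [IsProbabilityMeasure μ]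
    (X : Ω → ℕ) (hmX : Measurable X) (s : Finset ℕ) (hs : ∀ k ∉ s, μ {ω | X ω = k} = 0)
    (f : ℕ → ℝ) :
    ∫ ω, f (X ω) ∂μ = ∑ k ∈ s, μ.real {ω | X ω = k} * f k := by
  have hpt : ∀ k : ℕ, (μ.map X) {k} = μ {ω | X ω = k} := fun k =>
    Measure.map_apply hmX (measurableSet_singleton k)
  have : IsProbabilityMeasure (μ.map X) := Measure.isProbabilityMeasure_map hmX.aemeasurable
  have hae : ∀ᵐ k ∂(μ.map X), k ∈ (s : Set ℕ) := by
    rw [ae_iff_of_countable]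
    intro k hk
    by_contra hks
    exact hk ((hpt k).trans (hs k (by simpa using hks)))
  rw [← integral_map (f := f) hmX.aemeasurable (measurable_of_countable f).aestronglyMeasurable,
    ← Measure.restrict_eq_self_of_ae_mem hae, setIntegral_finset]
  · refine Finset.sum_congr rfl fun k _ => ?_
    simp only [Measure.real, hpt, smul_eq_mul]
  · exact IntegrableOn.finset

/-- Let `1 ≤ a ≤ b` and let `X` be an integer random variable with
`P[X = k] = k⁻²/Z` for `a ≤ k ≤ b`, where `Z = Σ_{i=a}^{b} i⁻²`. Then
`(1/2) ((E[X²] − E[X]) / E[X])² ≤ (1/2) ((b − a + 1) / (ln(b + 1) − ln a))²`. -/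
theorem stmt12 (a b : ℕ) (ha : 1 ≤ a) (hab : a ≤ b)
    (Ω : Type) [MeasurableSpace Ω] (μ : Measure Ω) [IsProbabilityMeasure μ]
    (X : Ω → ℕ) (hmX : Measurable X)
    (hX : ∀ k : ℕ, μ {ω | X ω = k} =
      if k ∈ Finset.Icc a b then
        ENNReal.ofReal
          (((k : ℝ) ^ 2)⁻¹ / ∑ i ∈ Finset.Icc a b, ((i : ℝ) ^ 2)⁻¹)
      else 0) :
    (1 / 2) * (((∫ ω, ((X ω : ℝ)) ^ 2 ∂μ) - ∫ ω, (X ω : ℝ) ∂μ) /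
        (∫ ω, (X ω : ℝ) ∂μ)) ^ 2 ≤
      (1 / 2) * (((b : ℝ) - (a : ℝ) + 1) /
        (Real.log ((b : ℝ) + 1) - Real.log (a : ℝ))) ^ 2 := by
  set Z : ℝ := ∑ i ∈ Finset.Icc a b, ((i : ℝ) ^ 2)⁻¹ with hZ
  set H : ℝ := ∑ k ∈ Finset.Icc a b, (k : ℝ)⁻¹ with hH
  have hpos : ∀ k ∈ Finset.Icc a b, (1 : ℝ) ≤ k := by
    intro k hk
    exact_mod_cast ha.trans (Finset.mem_Icc.mp hk).1
  have hne : (Finset.Icc a b).Nonempty := Finset.nonempty_Icc.mpr hab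
  have hZpos : 0 < Z := Finset.sum_pos (fun k hk => by have := hpos k hk; positivity) hne
  have hHpos : 0 < H := Finset.sum_pos (fun k hk => by have := hpos k hk; positivity) hne
  have hcard : ∑ _k ∈ Finset.Icc a b, (1 : ℝ) = (b : ℝ) - a + 1 := by
    rw [Finset.sum_const, Nat.card_Icc, nsmul_eq_mul, mul_one, Nat.cast_sub (by omega)]
    push_cast
    ring
  have hHle : H ≤ (b : ℝ) - a + 1 := by
    rw [← hcard]
    exact Finset.sum_le_sum fun k hk => inv_le_one_of_one_le₀ (hpos k hk)
  have hs : ∀ k ∉ Finset.Icc a b, μ {ω | X ω = k} = 0 := fun k hk => by rw [hX k, if_neg hk]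
  have hreal : ∀ k ∈ Finset.Icc a b, μ.real {ω | X ω = k} = ((k : ℝ) ^ 2)⁻¹ / Z := by
    intro k hk
    rw [Measure.real, hX k, if_pos hk, ENNReal.toReal_ofReal (by positivity)]
  have hE1 : ∫ ω, (X ω : ℝ) ∂μ = H / Z := by
    rw [integral_comp_eq_sum μ X hmX _ hs (fun k => (k : ℝ)), hH, Finset.sum_div]
    refine Finset.sum_congr rfl fun k hk => ?_
    have := hpos k hk
    rw [hreal k hk]
    field_simp
  have hE2 : ∫ ω, (X ω : ℝ) ^ 2 ∂μ = ((b : ℝ) - a + 1) / Z := by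
    rw [integral_comp_eq_sum μ X hmX _ hs (fun k => (k : ℝ) ^ 2), ← hcard, Finset.sum_div]
    refine Finset.sum_congr rfl fun k hk => ?_
    have := hpos k hk
    rw [hreal k hk]
    field_simp
  have hratio : (((b : ℝ) - a + 1) / Z - H / Z) / (H / Z) = ((b : ℝ) - a + 1 - H) / H := by
    field_simp
  have hlog : 0 < Real.log ((b : ℝ) + 1) - Real.log (a : ℝ) := by
    have ha0 : (0 : ℝ) < a := by exact_mod_cast ha
    have hab' : (a : ℝ) ≤ b := by exact_mod_cast hab
    exact sub_pos.mpr (Real.log_lt_log ha0 (by linarith))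
  rw [hE1, hE2, hratio]
  have hnonneg : 0 ≤ ((b : ℝ) - a + 1 - H) / H := div_nonneg (by linarith) hHpos.le
  have hle : ((b : ℝ) - a + 1 - H) / H ≤
      ((b : ℝ) - a + 1) / (Real.log ((b : ℝ) + 1) - Real.log (a : ℝ)) :=
    div_le_div₀ (by linarith) (by linarith) hlog (log_sub_log_le_sum_inv a b ha hab)
  gcongr
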